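/- arXiv:2301.01331 — 2 statements merged into one kernel-verified Lean document; each statement's English description precedes it below -/
import Mathlib

section
/- FC(5, 10) ≥ 44; that is, there exists a family of 43 distinct 5-element subsets of {1,…,10} whose universe equals {1,…,10} that is Non-FC. -/
/-!
Call `#F - 2 * #{S ∈ F | x ∈ S}` the surplus of `F` at `x`, so that `A` is Non-FC exactly when some
union-closed `F ⊇ A` has positive surplus at every point of `U(A)`. Following Poonen, it suffices
that a *nonnegative combination* of surpluses of union-closed families `L i` on `U(A)`, each
absorbing unions with `A`, is positive: take many copies of each `L i`, and attach to the `k`-th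
copy the set `Y \ {yₖ}` of fresh elements. Two different copies then have unions with trace `Y`,
over which we put all subsets of `U(A)` (surplus `0`); over the trace `∅` we put a family containing
`A`, whose surplus is bounded independently of the number of copies.

For the theorem, the layer of `t ∈ {1, …, 10}` restricts only those sets that contain `t`, by a
monotone condition which every one of the 43 chosen sets satisfies. Its surplus is therefore large
at `t`, negative at the few points the condition refers to, and zero elsewhere; a suitable
combination of the ten layers has positive surplus everywhere.
-/

/-- The universe of a family of finite sets: the union of all its members. -/
def famUniverse (A : Finset (Finset ℕ)) : Finset ℕ := A.sup id

/-- A family is union-closed if it is nonempty and closed under pairwise unions. -/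
def UnionClosed (F : Finset (Finset ℕ)) : Prop :=
  F.Nonempty ∧ ∀ A ∈ F, ∀ B ∈ F, A ∪ B ∈ F

/-- A family `A` is FC (Frankl-Complete) if for every union-closed family `F`
containing `A`, some element of the universe of `A` belongs to at least half
of the members of `F`. -/
def IsFC (A : Finset (Finset ℕ)) : Prop :=
  ∀ F : Finset (Finset ℕ), UnionClosed F → A ⊆ F →
    ∃ x ∈ famUniverse A, F.card ≤ 2 * (F.filter (fun S => x ∈ S)).card

/-- `IsKFamily k n A` means `A` is a family of (distinct) `k`-element subsets of
`[n] = {1, …, n}` whose universe equals `[n]`. -/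
def IsKFamily (k n : ℕ) (A : Finset (Finset ℕ)) : Prop :=
  (∀ S ∈ A, S.card = k ∧ S ⊆ Finset.Icc 1 n) ∧ famUniverse A = Finset.Icc 1 n

/-- The set of positive integers `m` such that every family of `m` distinct
`k`-element subsets of `[n]` with universe `[n]` is FC.  `FC(k, n)` is the least
element of this set, when it exists. -/
def FCwitnesses (k n : ℕ) : Set ℕ :=
  {m : ℕ | 0 < m ∧ ∀ A : Finset (Finset ℕ), A.card = m → IsKFamily k n A → IsFC A}

section Surplus

variable {α : Type*} [DecidableEq α]

/-- The surplus of a family `F` at `x`: the number of members avoiding `x` minus the number of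
members containing it. The point `x` belongs to less than half of the members of `F` iff it is
positive. -/
def surplus (F : Finset (Finset α)) (x : α) : ℤ :=
  F.card - 2 * (F.filter (x ∈ ·)).card

theorem surplus_eq_sum (F : Finset (Finset α)) (x : α) :
    surplus F x = ∑ S ∈ F, if x ∈ S then (-1 : ℤ) else 1 := by
  have hsplit := Finset.card_filter_add_card_filter_not (s := F) (x ∈ ·)
  rw [surplus, Finset.sum_ite, Finset.sum_const, Finset.sum_const, ← hsplit]
  simp only [nsmul_eq_mul]
  push_cast
  ring

theorem neg_card_le_surplus (F : Finset (Finset α)) (x : α) : -(F.card : ℤ) ≤ surplus F x := by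
  have hle := Finset.card_filter_le F (x ∈ ·)
  unfold surplus
  lia

theorem surplus_powerset {U : Finset α} {x : α} (hx : x ∈ U) : surplus U.powerset x = 0 := by
  rw [surplus_eq_sum, ← Finset.insert_erase hx,
    Finset.sum_powerset_insert (Finset.notMem_erase x U), ← Finset.sum_add_distrib]
  refine Finset.sum_eq_zero fun S hS => ?_
  have hxS : x ∉ S := fun h => Finset.notMem_erase x U (Finset.mem_powerset.1 hS h)
  simp [hxS]

end Surplus

section Glue

variable {α κ : Type*} [DecidableEq α] [Fintype κ]

/-- The family whose members are the sets `S ∪ tr k` with `S ∈ L k`: the families `L k`, made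
disjoint by attaching the trace `tr k` to every member of `L k`. -/
def glue (L : κ → Finset (Finset α)) (tr : κ → Finset α) : Finset (Finset α) :=
  (Finset.univ.sigma L).image fun p => p.2 ∪ tr p.1

theorem mem_glue {L : κ → Finset (Finset α)} {tr : κ → Finset α} {C : Finset α} :
    C ∈ glue L tr ↔ ∃ k, ∃ S ∈ L k, S ∪ tr k = C := by
  simp [glue]

theorem supClosed_glue {L : κ → Finset (Finset α)} {tr : κ → Finset α}
    (h : ∀ j k, ∃ l, tr l = tr j ∪ tr k ∧ ∀ S ∈ L j, ∀ T ∈ L k, S ∪ T ∈ L l) :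
    SupClosed (glue L tr : Set (Finset α)) := by
  intro C hC D hD
  obtain ⟨j, S, hS, rfl⟩ := mem_glue.1 hC
  obtain ⟨k, T, hT, rfl⟩ := mem_glue.1 hD
  obtain ⟨l, htr, hL⟩ := h j k
  refine mem_glue.2 ⟨l, S ∪ T, hL S hS T hT, ?_⟩
  rw [htr, Finset.sup_eq_union, Finset.union_union_union_comm]

theorem surplus_glue {U : Finset α} {L : κ → Finset (Finset α)} {tr : κ → Finset α}
    (hL : ∀ k, ∀ S ∈ L k, S ⊆ U) (htr : Function.Injective tr) (hdisj : ∀ k, Disjoint (tr k) U)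
    {x : α} (hx : x ∈ U) :
    surplus (glue L tr) x = ∑ k, surplus (L k) x := by
  have hinter {k S} (hS : S ∈ L k) : (S ∪ tr k) ∩ U = S := by
    rw [Finset.union_inter_distrib_right, Finset.disjoint_iff_inter_eq_empty.1 (hdisj k),
      Finset.union_empty, Finset.inter_eq_left.2 (hL k S hS)]
  have hsdiff {k S} (hS : S ∈ L k) : (S ∪ tr k) \ U = tr k := by
    rw [Finset.union_sdiff_distrib, Finset.sdiff_eq_empty_iff_subset.2 (hL k S hS),
      Finset.empty_union, (hdisj k).sdiff_eq_left]
  have hinj : Set.InjOn (fun p : Σ _ : κ, Finset α => p.2 ∪ tr p.1) (Finset.univ.sigma L) := by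
    rintro ⟨j, S⟩ hS ⟨k, T⟩ hT heq
    replace hS : S ∈ L j := (Finset.mem_sigma.1 hS).2
    replace hT : T ∈ L k := (Finset.mem_sigma.1 hT).2
    replace heq : S ∪ tr j = T ∪ tr k := heq
    obtain rfl : j = k := htr (by rw [← hsdiff hS, ← hsdiff hT, heq])
    obtain rfl : S = T := by rw [← hinter hS, ← hinter hT, heq]
    rfl
  simp only [surplus_eq_sum, glue, Finset.sum_image hinj, Finset.sum_sigma]
  have hxtr (k) : x ∉ tr k := fun h => Finset.disjoint_left.1 (hdisj k) h hx
  simp only [Finset.mem_union, hxtr, or_false]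

end Glue

section FlatTrace

variable {κ : Type*} [Fintype κ] [DecidableEq κ]

/-- The traces of the blow-up, indexed by a bottom level `none`, a top level `some none` and one
level `some (some k)` for each copy `k`. Copies omit one element each, and the additional element
`none` of `Option κ` keeps these traces nonempty even when there is a single copy. -/
def flatTrace : Option (Option κ) → Finset (Option κ)
  | none => ∅
  | some none => Finset.univ
  | some (some k) => {some k}ᶜ

theorem flatTrace_injective : Function.Injective (flatTrace (κ := κ)) := by
  have hbot (k : κ) : (∅ : Finset (Option κ)) ≠ {some k}ᶜ := fun h => by
    simpa using congrArg (none ∈ ·) h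
  have htop (k : κ) : (Finset.univ : Finset (Option κ)) ≠ {some k}ᶜ := fun h => by
    simpa using congrArg (some k ∈ ·) h
  rintro (_ | _ | j) (_ | _ | k) h
  · rfl
  · exact absurd h.symm Finset.univ_nonempty.ne_empty
  · exact absurd h (hbot k)
  · exact absurd h Finset.univ_nonempty.ne_empty
  · rfl
  · exact absurd h (htop k)
  · exact absurd h.symm (hbot j)
  · exact absurd h.symm (htop j)
  · simpa using compl_injective h

theorem flatTrace_union_of_ne {j k : κ} (hjk : j ≠ k) :
    flatTrace (some (some j)) ∪ flatTrace (some (some k)) = Finset.univ := by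
  have hinter : ({some j} : Finset (Option κ)) ∩ {some k} = ∅ :=
    Finset.disjoint_iff_inter_eq_empty.1 (by simpa using hjk)
  simp only [flatTrace, ← Finset.compl_inter, hinter, Finset.compl_empty]

end FlatTrace

section BlowUp

variable {α κ : Type*} [DecidableEq α] [Fintype κ]

/-- The subsets `S` of `U` such that each family `L k` is stable under union with `S`: the largest
possible bottom level of a blow-up of the families `L k`. -/
def absorbed (U : Finset α) (L : κ → Finset (Finset α)) : Finset (Finset α) :=
  U.powerset.filter fun S => ∀ k, ∀ T ∈ L k, S ∪ T ∈ L k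

theorem mem_absorbed {U : Finset α} {L : κ → Finset (Finset α)} {S : Finset α} :
    S ∈ absorbed U L ↔ S ⊆ U ∧ ∀ k, ∀ T ∈ L k, S ∪ T ∈ L k := by
  simp [absorbed]

theorem union_mem_absorbed {U : Finset α} {L : κ → Finset (Finset α)} {S T : Finset α}
    (hS : S ∈ absorbed U L) (hT : T ∈ absorbed U L) : S ∪ T ∈ absorbed U L := by
  rw [mem_absorbed] at hS hT ⊢
  refine ⟨Finset.union_subset hS.1 hT.1, fun k R hR => ?_⟩
  rw [Finset.union_assoc]
  exact hS.2 k _ (hT.2 k R hR)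

/-- The family placed over each trace of the blow-up of the families `L k`, with the indexing of
`flatTrace`. -/
def level (U : Finset α) (L : κ → Finset (Finset α)) : Option (Option κ) → Finset (Finset α)
  | none => absorbed U L
  | some none => U.powerset
  | some (some k) => L k

theorem subset_of_mem_level {U : Finset α} {L : κ → Finset (Finset α)}
    (hL : ∀ k, ∀ S ∈ L k, S ⊆ U) {l : Option (Option κ)} {S : Finset α} (hS : S ∈ level U L l) :
    S ⊆ U := by
  match l with
  | none => exact (mem_absorbed.1 hS).1
  | some none => exact Finset.mem_powerset.1 hS
  | some (some k) => exact hL k S hS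

variable [DecidableEq κ]

theorem exists_flatTrace_eq_union {U : Finset α} {L : κ → Finset (Finset α)}
    (hL : ∀ k, ∀ S ∈ L k, S ⊆ U) (hsup : ∀ k, SupClosed (L k : Set (Finset α)))
    (i j : Option (Option κ)) :
    ∃ l, flatTrace l = flatTrace i ∪ flatTrace j ∧
      ∀ S ∈ level U L i, ∀ T ∈ level U L j, S ∪ T ∈ level U L l := by
  have htop : ∀ S ∈ level U L i, ∀ T ∈ level U L j, S ∪ T ∈ level U L (some none) :=
    fun S hS T hT => Finset.mem_powerset.2 <|
      Finset.union_subset (subset_of_mem_level hL hS) (subset_of_mem_level hL hT)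
  match i, j with
  | none, none => exact ⟨none, rfl, fun _ hS _ hT => union_mem_absorbed hS hT⟩
  | some none, _ => exact ⟨some none, (top_sup_eq _).symm, htop⟩
  | _, some none => exact ⟨some none, (sup_top_eq _).symm, htop⟩
  | none, some (some k) =>
    exact ⟨some (some k), (Finset.empty_union _).symm,
      fun _ hS T hT => (mem_absorbed.1 hS).2 k T hT⟩
  | some (some k), none =>
    refine ⟨some (some k), (Finset.union_empty _).symm, fun S hS T hT => ?_⟩
    rw [Finset.union_comm]
    exact (mem_absorbed.1 hT).2 k S hS
  | some (some j), some (some k) =>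
    obtain rfl | hjk := eq_or_ne j k
    · exact ⟨some (some j), (Finset.union_self _).symm, fun _ hS _ hT => hsup j hS hT⟩
    · exact ⟨some none, (flatTrace_union_of_ne hjk).symm, htop⟩

/-- The blow-up of the families `L k`: their levels glued along the flat traces, where the elements
of the traces are realised by the embedding `e`. -/
def blowUp (U : Finset α) (L : κ → Finset (Finset α)) (e : Option κ ↪ α) : Finset (Finset α) :=
  glue (level U L) fun l => (flatTrace l).map e

theorem supClosed_blowUp {U : Finset α} {L : κ → Finset (Finset α)} (hL : ∀ k, ∀ S ∈ L k, S ⊆ U)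
    (hsup : ∀ k, SupClosed (L k : Set (Finset α))) (e : Option κ ↪ α) :
    SupClosed (blowUp U L e : Set (Finset α)) := by
  refine supClosed_glue fun i j => ?_
  obtain ⟨l, htrace, hlevel⟩ := exists_flatTrace_eq_union hL hsup i j
  exact ⟨l, by rw [htrace, Finset.map_union], hlevel⟩

theorem absorbed_subset_blowUp (U : Finset α) (L : κ → Finset (Finset α)) (e : Option κ ↪ α) :
    absorbed U L ⊆ blowUp U L e :=
  fun S hS => mem_glue.2 ⟨none, S, hS, by simp [flatTrace]⟩

theorem surplus_blowUp {U : Finset α} {L : κ → Finset (Finset α)} (hL : ∀ k, ∀ S ∈ L k, S ⊆ U)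
    {e : Option κ ↪ α} (he : ∀ o, e o ∉ U) {x : α} (hx : x ∈ U) :
    surplus (blowUp U L e) x = surplus (absorbed U L) x + ∑ k, surplus (L k) x := by
  have hinj : Function.Injective fun l => (flatTrace l).map e :=
    (Finset.map_injective e).comp flatTrace_injective
  have hdisj (l) : Disjoint ((flatTrace l).map e) U := by
    simp only [Finset.disjoint_left, Finset.mem_map]
    rintro _ ⟨o, -, rfl⟩
    exact he o
  rw [blowUp, surplus_glue (fun l _ => subset_of_mem_level hL) hinj hdisj hx,
    Fintype.sum_option, Fintype.sum_option]
  simp only [level, surplus_powerset hx, zero_add]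

end BlowUp

theorem exists_embedding_forall_notMem {α κ : Type*} [Infinite α] [Finite κ] (U : Finset α) :
    ∃ e : κ ↪ α, ∀ k, e k ∉ U := by
  have : Infinite {x // x ∉ U} := U.finite_toSet.infinite_compl.to_subtype
  let e : κ ↪ {x // x ∉ U} :=
    (Finite.equivFin κ).toEmbedding.trans (Fin.valEmbedding.trans (Infinite.natEmbedding _))
  exact ⟨e.trans (Function.Embedding.subtype _), fun k => (e k).2⟩

theorem not_isFC_of_forall_surplus_pos {A F : Finset (Finset ℕ)} (hF : UnionClosed F)
    (hAF : A ⊆ F) (hpos : ∀ x ∈ famUniverse A, 0 < surplus F x) : ¬ IsFC A := by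
  intro hA
  obtain ⟨x, hx, hle⟩ := hA F hF hAF
  have hlt := hpos x hx
  unfold surplus at hlt
  lia

theorem not_isFC_of_sum_surplus_pos {ι : Type*} [Fintype ι] {A : Finset (Finset ℕ)}
    {L : ι → Finset (Finset ℕ)} (w : ι → ℕ) (hL : ∀ i, ∀ S ∈ L i, S ⊆ famUniverse A)
    (hsup : ∀ i, SupClosed (L i : Set (Finset ℕ)))
    (hA : ∀ i, ∀ S ∈ A, ∀ T ∈ L i, S ∪ T ∈ L i)
    (hpos : ∀ x ∈ famUniverse A, 0 < ∑ i, (w i : ℤ) * surplus (L i) x) : ¬ IsFC A := by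
  classical
  set U := famUniverse A
  -- The bottom level costs at most `2 ^ #U`, so this many copies of the layers outweigh it.
  let N : ℕ := U.powerset.card + 1
  let copies : (Σ i, Fin (N * w i)) → Finset (Finset ℕ) := fun k => L k.1
  have hcopies : ∀ k, ∀ S ∈ copies k, S ⊆ U := fun k => hL k.1
  have hA_absorbed : A ⊆ absorbed U copies := fun S hS =>
    mem_absorbed.2 ⟨Finset.le_sup (f := id) hS, fun k => hA k.1 S hS⟩
  obtain ⟨e, he⟩ := exists_embedding_forall_notMem (κ := Option (Σ i, Fin (N * w i))) U
  have hsub := absorbed_subset_blowUp U copies e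
  have hempty : ∅ ∈ absorbed U copies := mem_absorbed.2 (by simp)
  refine not_isFC_of_forall_surplus_pos
    ⟨⟨∅, hsub hempty⟩, supClosed_blowUp hcopies (fun k => hsup k.1) e⟩
    (hA_absorbed.trans hsub) fun x hx => ?_
  have hsum : ∑ k, surplus (copies k) x = N * ∑ i, (w i : ℤ) * surplus (L i) x := by
    simp [copies, Fintype.sum_sigma, Finset.mul_sum, mul_assoc]
  have hbottom : -(U.powerset.card : ℤ) ≤ surplus (absorbed U copies) x :=
    (neg_le_neg (mod_cast Finset.card_filter_le _ _)).trans (neg_card_le_surplus _ x)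
  have hlayers : (N : ℤ) ≤ N * ∑ i, (w i : ℤ) * surplus (L i) x :=
    le_mul_of_one_le_right N.cast_nonneg (hpos x hx)
  rw [surplus_blowUp hcopies he hx, hsum]
  push_cast [N] at hlayers ⊢
  linarith

section FiveTen

/-- The 43 sets `{9, 10} ∪ T` with `T ⊆ {1, …, 8}` a triple meeting `{1, 2, 3}`, other than the
triples `{3, 6, 7}`, `{3, 6, 8}` and `{3, 7, 8}`. -/
def nonFCFamily : Finset (Finset ℕ) :=
  ((Finset.Icc 1 10).powersetCard 5).filter fun S =>
    9 ∈ S ∧ 10 ∈ S ∧ (S ∩ {1, 2, 3}).Nonempty ∧ (3 ∈ S → (S ∩ {1, 2, 4, 5}).Nonempty)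

/-- The set which a member of the layer of `t` has to meet as soon as it contains `t`. -/
def layerCore (t : ℕ) : Finset ℕ := if t = 3 then {1, 2, 4, 5} else {1, 2, 3}

/-- The layer of `t`: the subsets of `{1, …, 10}` which, if they contain `t`, also contain `9` and
`10` and meet `layerCore t`. These are the union-closed families combined in Poonen's criterion. -/
def layer (t : ℕ) : Finset (Finset ℕ) :=
  (Finset.Icc 1 10).powerset.filter fun S => t ∈ S → 9 ∈ S ∧ 10 ∈ S ∧ (S ∩ layerCore t).Nonempty

theorem supClosed_layer (t : ℕ) : SupClosed (layer t : Set (Finset ℕ)) := by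
  intro S hS T hT
  simp only [layer, Finset.mem_coe, Finset.mem_filter, Finset.mem_powerset,
    Finset.sup_eq_union] at hS hT ⊢
  refine ⟨Finset.union_subset hS.1 hT.1, fun ht => ?_⟩
  rw [Finset.union_inter_distrib_right, Finset.union_nonempty]
  rcases Finset.mem_union.1 ht with ht | ht
  · obtain ⟨h9, h10, hcore⟩ := hS.2 ht
    exact ⟨Finset.mem_union_left T h9, Finset.mem_union_left T h10, Or.inl hcore⟩
  · obtain ⟨h9, h10, hcore⟩ := hT.2 ht
    exact ⟨Finset.mem_union_right S h9, Finset.mem_union_right S h10, Or.inr hcore⟩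

theorem nonFCFamily_subset_layer (t : ℕ) : nonFCFamily ⊆ layer t := by
  intro S hS
  simp only [nonFCFamily, Finset.mem_filter, Finset.mem_powersetCard] at hS
  obtain ⟨⟨hsub, -⟩, h9, h10, hmeet, hmeet_three⟩ := hS
  refine Finset.mem_filter.2 ⟨Finset.mem_powerset.2 hsub, fun ht => ⟨h9, h10, ?_⟩⟩
  unfold layerCore
  split_ifs with h3
  · exact hmeet_three (h3 ▸ ht)
  · exact hmeet

theorem card_nonFCFamily : nonFCFamily.card = 43 := by decide +kernel

theorem famUniverse_nonFCFamily : famUniverse nonFCFamily = Finset.Icc 1 10 := by decide +kernel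

theorem isKFamily_nonFCFamily : IsKFamily 5 10 nonFCFamily := by
  refine ⟨fun S hS => ?_, famUniverse_nonFCFamily⟩
  obtain ⟨hsub, hcard⟩ := Finset.mem_powersetCard.1 (Finset.mem_filter.1 hS).1
  exact ⟨hcard, hsub⟩

/-- The table of surpluses of the layers: rows are indexed by layers and columns by points, both
shifted by one from `{1, …, 10}` to `Fin 10`. -/
def layerSurplus : Fin 10 → Fin 10 → ℤ :=
  ![![384,   0,   0,   0,   0,   0,   0,   0, -128, -128],
    ![  0, 384,   0,   0,   0,   0,   0,   0, -128, -128],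
    ![ -8,  -8, 392,  -8,  -8,   0,   0,   0, -120, -120],
    ![-16, -16, -16, 400,   0,   0,   0,   0, -112, -112],
    ![-16, -16, -16,   0, 400,   0,   0,   0, -112, -112],
    ![-16, -16, -16,   0,   0, 400,   0,   0, -112, -112],
    ![-16, -16, -16,   0,   0,   0, 400,   0, -112, -112],
    ![-16, -16, -16,   0,   0,   0,   0, 400, -112, -112],
    ![-32, -32, -32,   0,   0,   0,   0,   0,  288, -224],
    ![-32, -32, -32,   0,   0,   0,   0,   0, -224,  288]]

-- The 512 sets avoiding `t` have surplus 512 at `t` and 0 elsewhere. The other members of the layer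
-- number `2 ^ 7`, `2 ^ 7 - 2 ^ 3`, `2 ^ 7 - 2 ^ 4` or `2 ^ 8 - 2 ^ 5`; their surplus is minus that
-- number at `t`, 9 and 10, and minus the subtracted power of two on `layerCore t`.
theorem surplus_layer (t x : Fin 10) : surplus (layer (t + 1)) (x + 1) = layerSurplus t x := by
  revert t x
  decide +kernel

/-- The multiplicities of the layers in the combination, indexed as in `layerSurplus`: an integer
point of the cone of weights whose combined surplus is everywhere positive. This cone is narrow,
hence the large entries. -/
def layerWeight : Fin 10 → ℕ :=
  ![2499, 2499, 2399, 48, 48, 1, 1, 1, 14669, 14669]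

theorem sum_layerWeight_mul_layerSurplus_pos (x : Fin 10) :
    0 < ∑ t, (layerWeight t : ℤ) * layerSurplus t x := by
  revert x
  decide +kernel

theorem not_isFC_nonFCFamily : ¬ IsFC nonFCFamily := by
  refine not_isFC_of_sum_surplus_pos (L := fun t : Fin 10 => layer (t + 1)) layerWeight
    (fun t S hS => ?_) (fun t => supClosed_layer _)
    (fun t S hS T hT => supClosed_layer _ (nonFCFamily_subset_layer _ hS) hT) (fun x hx => ?_)
  · rw [famUniverse_nonFCFamily]
    exact Finset.mem_powerset.1 (Finset.mem_filter.1 hS).1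
  · rw [famUniverse_nonFCFamily, Finset.mem_Icc] at hx
    obtain ⟨y, rfl⟩ : ∃ y : Fin 10, x = y + 1 := ⟨⟨x - 1, by lia⟩, by simp only; lia⟩
    simpa only [surplus_layer] using sum_layerWeight_mul_layerSurplus_pos y

end FiveTen

/-- FC(5, 10) ≥ 44: there is a Non-FC family of 43 distinct 5-element subsets of
{1, …, 10} with universe {1, …, 10}. -/
theorem FC_lower_bound_5_10 :
    ∃ A : Finset (Finset ℕ), A.card = 43 ∧ IsKFamily 5 10 A ∧ ¬ IsFC A := by
  exact ⟨nonFCFamily, card_nonFCFamily, isKFamily_nonFCFamily, not_isFC_nonFCFamily⟩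
end

section
/- FC(6, 9) ≥ 42; that is, there exists a family of 41 distinct 6-element subsets of {1,…,9} whose universe equals {1,…,9} that is Non-FC. -/
/-!
A family `A` is Non-FC as soon as finitely many union-closed families `F i ⊇ A` on a common ground
set `V` contain, on weighted average, each `x` in fewer than half of their members. Indeed, take
many copies of each `F i`, put a fresh tag point for each copy, and attach to the copy the set of
all tags but its own; members of different copies then have a union carrying all the tags, and over
that full tag set we place the whole power set of `V`, in which every `x ∈ V` lies in exactly half
of the members. Adding the untagged sets common to all `F i` makes the result contain `A`, at a
cost of at most `2 ^ #V`, which the number of copies outweighs.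

Given an up-set `p` containing `A`, the families used are `{S ⊆ V | i ∉ S ∨ p S}`, one for each
`i ∈ V`: the sets avoiding `i` favour the absence of `i` and are neutral for every other point, so
a suitable weighting of them compensates for the sets of `p`.
-/

section NonFC

open Finset

section SetAlgebra

variable {α : Type*} [DecidableEq α]

lemma supClosed_powerset (V : Finset α) : SupClosed (V.powerset : Set (Finset α)) := by
  intro S hS T hT
  simp only [mem_coe, mem_powerset] at hS hT ⊢
  exact union_subset hS hT

lemma union_inter_eq_left_of_disjoint {V S t : Finset α} (hS : S ⊆ V) (ht : Disjoint V t) :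
    (S ∪ t) ∩ V = S := by
  rw [union_inter_distrib_right, inter_eq_left.2 hS, disjoint_iff_inter_eq_empty.1 ht.symm,
    union_empty]

lemma union_sdiff_eq_right_of_disjoint {V S t : Finset α} (hS : S ⊆ V) (ht : Disjoint V t) :
    (S ∪ t) \ V = t := by
  rw [union_sdiff_distrib, sdiff_eq_empty_iff_subset.2 hS, empty_union, ht.symm.sdiff_eq_left]

end SetAlgebra

variable {A : Finset (Finset ℕ)} {V : Finset ℕ} {x : ℕ}

section Deficit

variable {F G : Finset (Finset ℕ)}

/-- The deficit of `x` in the family `F`: the number of members avoiding `x` minus the number of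
members containing `x`. Being integer-valued, it can be averaged over several families. -/
def deficit (F : Finset (Finset ℕ)) (x : ℕ) : ℤ := #F - 2 * #{S ∈ F | x ∈ S}

lemma not_isFC_of_deficit_pos (hF : UnionClosed F) (hAF : A ⊆ F)
    (h : ∀ x ∈ famUniverse A, 0 < deficit F x) : ¬ IsFC A := by
  intro hA
  obtain ⟨x, hx, hle⟩ := hA F hF hAF
  have := h x hx
  simp only [deficit] at this
  omega

lemma deficit_eq_sum (F : Finset (Finset ℕ)) (x : ℕ) :
    deficit F x = ∑ S ∈ F, if x ∈ S then -1 else 1 := by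
  have hcard := card_filter_add_card_filter_not (s := F) (fun S => x ∈ S)
  simp only [deficit, sum_ite, sum_const, nsmul_eq_mul]
  omega

lemma neg_card_le_deficit (F : Finset (Finset ℕ)) (x : ℕ) : -(#F : ℤ) ≤ deficit F x := by
  have := card_filter_le F (fun S => x ∈ S)
  simp only [deficit]
  omega

lemma deficit_union (h : Disjoint F G) (x : ℕ) :
    deficit (F ∪ G) x = deficit F x + deficit G x := by
  simp only [deficit_eq_sum, sum_union h]

lemma deficit_sub_card_le_deficit_union (F G : Finset (Finset ℕ)) (x : ℕ) :
    deficit F x - #G ≤ deficit (F ∪ G) x := by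
  rw [← union_sdiff_self_eq_union, deficit_union disjoint_sdiff]
  have hlower := neg_card_le_deficit (G \ F) x
  have hcard := card_le_card (sdiff_subset : G \ F ⊆ G)
  omega

lemma deficit_powerset_of_notMem (hx : x ∉ V) : deficit V.powerset x = 2 ^ #V := by
  have hempty : ({S ∈ V.powerset | x ∈ S} : Finset (Finset ℕ)) = ∅ :=
    filter_eq_empty_iff.2 fun S hS hxS => hx (mem_powerset.1 hS hxS)
  simp [deficit, hempty]

lemma deficit_powerset_of_mem (hx : x ∈ V) : deficit V.powerset x = 0 := by
  rw [deficit_eq_sum, ← insert_erase hx, sum_powerset_insert (notMem_erase x V),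
    ← sum_add_distrib]
  refine sum_eq_zero fun S hS => ?_
  have hxS : x ∉ S := fun h => notMem_erase x V (mem_powerset.1 hS h)
  simp [hxS]

end Deficit

/-- The union of the families `L k`, each with the set `tag k` adjoined to all of its members. -/
def taggedUnion {κ : Type*} [Fintype κ] (tag : κ → Finset ℕ) (L : κ → Finset (Finset ℕ)) :
    Finset (Finset ℕ) :=
  univ.biUnion fun k => (L k).image (· ∪ tag k)

section TaggedUnion

variable {κ : Type*} [Fintype κ] {tag : κ → Finset ℕ} {L : κ → Finset (Finset ℕ)}

lemma mem_taggedUnion {P : Finset ℕ} :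
    P ∈ taggedUnion tag L ↔ ∃ k, ∃ S ∈ L k, S ∪ tag k = P := by
  simp [taggedUnion]

lemma deficit_taggedUnion (htag : Function.Injective tag) (hdisj : ∀ k, Disjoint V (tag k))
    (hL : ∀ k, L k ⊆ V.powerset) (hx : x ∈ V) :
    deficit (taggedUnion tag L) x = ∑ k, deficit (L k) x := by
  have hsub {k S} (hS : S ∈ L k) : S ⊆ V := mem_powerset.1 (hL k hS)
  have hlayers : ((univ : Finset κ) : Set κ).PairwiseDisjoint fun k => (L k).image (· ∪ tag k) := by
    intro k _ l _ hkl
    refine disjoint_left.2 fun P hPk hPl => hkl (htag ?_)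
    obtain ⟨S, hS, rfl⟩ := mem_image.1 hPk
    obtain ⟨T, hT, hTS⟩ := mem_image.1 hPl
    rw [← union_sdiff_eq_right_of_disjoint (hsub hS) (hdisj k), ← hTS,
      union_sdiff_eq_right_of_disjoint (hsub hT) (hdisj l)]
  have hinj (k : κ) : Set.InjOn (· ∪ tag k) (L k : Set (Finset ℕ)) := by
    intro S hS T hT hST
    dsimp only at hST
    rw [← union_inter_eq_left_of_disjoint (hsub hS) (hdisj k), hST,
      union_inter_eq_left_of_disjoint (hsub hT) (hdisj k)]
  have hx_tag (k : κ) : x ∉ tag k := disjoint_left.1 (hdisj k) hx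
  simp only [deficit_eq_sum, taggedUnion]
  rw [sum_biUnion hlayers]
  refine sum_congr rfl fun k _ => ?_
  simp [sum_image (hinj k), hx_tag k]

end TaggedUnion

section Gluing

variable {ι : Type*} {F : ι → Finset (Finset ℕ)}

/-- The layers of the gluing of the families `F i`, the power set of `V` being the layer of
`none`. -/
def gluingLayer (V : Finset ℕ) (F : ι → Finset (Finset ℕ)) (k : Option ι) :
    Finset (Finset ℕ) :=
  k.elim V.powerset F

lemma gluingLayer_subset_powerset (hFV : ∀ i, F i ⊆ V.powerset) :
    ∀ k, gluingLayer V F k ⊆ V.powerset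
  | none => Subset.rfl
  | some i => hFV i

lemma supClosed_gluingLayer (hF : ∀ i, SupClosed (F i : Set (Finset ℕ))) :
    ∀ k, SupClosed (gluingLayer V F k : Set (Finset ℕ))
  | none => supClosed_powerset V
  | some i => hF i

variable [Fintype ι]

/-- The subsets of `V` that belong to all families `F i`. -/
def commonMembers (V : Finset ℕ) (F : ι → Finset (Finset ℕ)) : Finset (Finset ℕ) :=
  {S ∈ V.powerset | ∀ i, S ∈ F i}

lemma card_commonMembers_le (V : Finset ℕ) (F : ι → Finset (Finset ℕ)) :
    #(commonMembers V F) ≤ 2 ^ #V :=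
  (card_filter_le _ _).trans_eq (card_powerset V)

lemma commonMembers_subset_gluingLayer :
    ∀ k, commonMembers V F ⊆ gluingLayer V F k
  | none => filter_subset _ _
  | some i => fun _ hS => (mem_filter.1 hS).2 i

lemma supClosed_commonMembers (hF : ∀ i, SupClosed (F i : Set (Finset ℕ))) :
    SupClosed (commonMembers V F : Set (Finset ℕ)) := by
  intro S hS T hT
  simp only [commonMembers, coe_filter, Set.mem_ofPred_eq] at hS hT ⊢
  exact ⟨supClosed_powerset V hS.1 hT.1, fun i => hF i (hS.2 i) (hT.2 i)⟩

variable [DecidableEq ι] {e : ι ↪ ℕ}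

/-- The tags used in the gluing: all points `e i` with `i ≠ k`. In particular `none` is tagged by
the set of all points `e i`. -/
def coTag (e : ι ↪ ℕ) (k : Option ι) : Finset ℕ :=
  ({i | some i ≠ k} : Finset ι).map e

lemma coTag_injective (e : ι ↪ ℕ) : Function.Injective (coTag e) := by
  intro k l hkl
  have hiff (i : ι) : some i ≠ k ↔ some i ≠ l := by
    simpa [Finset.ext_iff] using Finset.ext_iff.1 (map_injective e hkl) i
  exact Option.ext fun i => by simpa [eq_comm] using not_iff_not.1 (hiff i)

lemma coTag_union_coTag_of_ne (e : ι ↪ ℕ) {k l : Option ι} (hkl : k ≠ l) :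
    coTag e k ∪ coTag e l = coTag e none := by
  rw [coTag, coTag, coTag, ← map_union]
  congr 1
  ext i
  simp only [mem_union, mem_filter_univ]
  grind

lemma disjoint_coTag (he : ∀ i, e i ∉ V) (k : Option ι) :
    Disjoint V (coTag e k) := by
  refine disjoint_right.2 fun n hn => ?_
  obtain ⟨i, -, rfl⟩ := mem_map.1 hn
  exact he i

/-- The union-closed family built from the families `F i` on the ground set `V` by means of the tag
points `e i`. -/
def gluing (e : ι ↪ ℕ) (V : Finset ℕ) (F : ι → Finset (Finset ℕ)) : Finset (Finset ℕ) :=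
  taggedUnion (coTag e) (gluingLayer V F) ∪ commonMembers V F

lemma mem_gluing_of_mem_layer {k : Option ι} {S : Finset ℕ} (hS : S ∈ gluingLayer V F k) :
    S ∪ coTag e k ∈ gluing e V F :=
  mem_union_left _ (mem_taggedUnion.2 ⟨k, S, hS, rfl⟩)

lemma unionClosed_gluing (hFV : ∀ i, F i ⊆ V.powerset)
    (hF : ∀ i, SupClosed (F i : Set (Finset ℕ))) : UnionClosed (gluing e V F) := by
  have hlayer := supClosed_gluingLayer (V := V) hF
  have hmixed {k S T} (hS : S ∈ gluingLayer V F k) (hT : T ∈ commonMembers V F) :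
      S ∪ coTag e k ∪ T ∈ gluing e V F := by
    rw [union_right_comm]
    exact mem_gluing_of_mem_layer (hlayer k hS (commonMembers_subset_gluingLayer k hT))
  refine ⟨⟨_, mem_gluing_of_mem_layer (k := none) (empty_mem_powerset V)⟩, fun P hP Q hQ => ?_⟩
  rcases mem_union.1 hP with hP | hP <;> rcases mem_union.1 hQ with hQ | hQ
  · obtain ⟨k, S, hS, rfl⟩ := mem_taggedUnion.1 hP
    obtain ⟨l, T, hT, rfl⟩ := mem_taggedUnion.1 hQ
    rw [union_union_union_comm]
    rcases eq_or_ne k l with rfl | hkl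
    · rw [union_self]
      exact mem_gluing_of_mem_layer (hlayer k hS hT)
    · rw [coTag_union_coTag_of_ne e hkl]
      exact mem_gluing_of_mem_layer (k := none) (supClosed_powerset V
        (gluingLayer_subset_powerset hFV k hS) (gluingLayer_subset_powerset hFV l hT))
  · obtain ⟨k, S, hS, rfl⟩ := mem_taggedUnion.1 hP
    exact hmixed hS hQ
  · obtain ⟨k, S, hS, rfl⟩ := mem_taggedUnion.1 hQ
    rw [union_comm P]
    exact hmixed hS hP
  · exact mem_union_right _ (supClosed_commonMembers hF hP hQ)

lemma sum_deficit_sub_le_deficit_gluing (he : ∀ i, e i ∉ V) (hFV : ∀ i, F i ⊆ V.powerset)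
    (hx : x ∈ V) : ∑ i, deficit (F i) x - 2 ^ #V ≤ deficit (gluing e V F) x := by
  have hcommon : (#(commonMembers V F) : ℤ) ≤ 2 ^ #V := mod_cast card_commonMembers_le V F
  calc ∑ i, deficit (F i) x - 2 ^ #V
      = deficit (taggedUnion (coTag e) (gluingLayer V F)) x - 2 ^ #V := by
        rw [deficit_taggedUnion (coTag_injective e) (disjoint_coTag he)
          (gluingLayer_subset_powerset hFV) hx, Fintype.sum_option]
        simp [gluingLayer, deficit_powerset_of_mem hx]
    _ ≤ deficit (taggedUnion (coTag e) (gluingLayer V F)) x - #(commonMembers V F) := by gcongr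
    _ ≤ deficit (gluing e V F) x := deficit_sub_card_le_deficit_union _ _ x

end Gluing

section Criterion

lemma famUniverse_subset (hA : A ⊆ V.powerset) : famUniverse A ⊆ V :=
  Finset.sup_le fun _ hS => mem_powerset.1 (hA hS)

lemma exists_embedding_forall_notMem_s9 (ι : Type*) [Finite ι] (V : Finset ℕ) :
    ∃ e : ι ↪ ℕ, ∀ i, e i ∉ V := by
  obtain ⟨n, ⟨f⟩⟩ := Finite.exists_equiv_fin ι
  have hinf : (V : Set ℕ)ᶜ.Infinite := V.finite_toSet.infinite_compl
  let g := hinf.natEmbedding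
  exact ⟨f.toEmbedding.trans (Fin.valEmbedding.trans (g.trans (.subtype _))), fun i => (g _).2⟩

variable {ι : Type*} [Fintype ι] {F : ι → Finset (Finset ℕ)}

lemma not_isFC_of_two_pow_lt_sum_deficit (hAV : A ⊆ V.powerset) (hAF : ∀ i, A ⊆ F i)
    (hFV : ∀ i, F i ⊆ V.powerset) (hF : ∀ i, SupClosed (F i : Set (Finset ℕ)))
    (h : ∀ x ∈ famUniverse A, 2 ^ #V < ∑ i, deficit (F i) x) : ¬ IsFC A := by
  classical
  obtain ⟨e, he⟩ := exists_embedding_forall_notMem_s9 ι V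
  have hA : A ⊆ gluing e V F := fun S hS =>
    mem_union_right _ (mem_filter.2 ⟨hAV hS, fun i => hAF i hS⟩)
  refine not_isFC_of_deficit_pos (unionClosed_gluing hFV hF) hA fun x hx => ?_
  have hglue := sum_deficit_sub_le_deficit_gluing he hFV (famUniverse_subset hAV hx)
  linarith [h x hx]

theorem not_isFC_of_weighted_sum_deficit_pos (w : ι → ℕ) (hAV : A ⊆ V.powerset)
    (hAF : ∀ i, A ⊆ F i) (hFV : ∀ i, F i ⊆ V.powerset)
    (hF : ∀ i, SupClosed (F i : Set (Finset ℕ)))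
    (h : ∀ x ∈ famUniverse A, 0 < ∑ i, w i * deficit (F i) x) : ¬ IsFC A := by
  let copies := Σ i, Fin ((2 ^ #V + 1) * w i)
  refine not_isFC_of_two_pow_lt_sum_deficit (F := fun c : copies => F c.1) hAV
    (fun c => hAF c.1) (fun c => hFV c.1) (fun c => hF c.1) fun x hx => ?_
  have hsum : ∑ c : copies, deficit (F c.1) x = (2 ^ #V + 1) * ∑ i, w i * deficit (F i) x := by
    simp [copies, Fintype.sum_sigma, mul_sum, mul_assoc]
  rw [hsum]
  nlinarith [h x hx, pow_pos (two_pos : (0 : ℤ) < 2) #V]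

/-- The subsets of `V` that avoid `i` or satisfy `p`. -/
def avoidOr (V : Finset ℕ) (p : Finset ℕ → Prop) [DecidablePred p] (i : ℕ) :
    Finset (Finset ℕ) :=
  {S ∈ V.powerset | i ∉ S ∨ p S}

variable {p : Finset ℕ → Prop} [DecidablePred p]

lemma supClosed_avoidOr (hp : Monotone p) (i : ℕ) :
    SupClosed (avoidOr V p i : Set (Finset ℕ)) := by
  intro S hS T hT
  simp only [avoidOr, coe_filter, Set.mem_ofPred_eq] at hS hT ⊢
  refine ⟨supClosed_powerset V hS.1 hT.1, ?_⟩
  have hpS : p S → p (S ⊔ T) := hp le_sup_left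
  have hpT : p T → p (S ⊔ T) := hp le_sup_right
  simp only [sup_eq_union, mem_union] at hpS hpT ⊢
  tauto

lemma deficit_avoidOr {i : ℕ} (hi : i ∈ V) (hx : x ∈ V) :
    deficit (avoidOr V p i) x =
      (if i = x then 2 ^ (#V - 1) else 0) + deficit {S ∈ V.powerset | i ∈ S ∧ p S} x := by
  have hsplit : avoidOr V p i = (V.erase i).powerset ∪ {S ∈ V.powerset | i ∈ S ∧ p S} := by
    ext S
    simp only [avoidOr, mem_filter, mem_union, mem_powerset, subset_erase]
    tauto
  have hdisj : Disjoint (V.erase i).powerset {S ∈ V.powerset | i ∈ S ∧ p S} :=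
    disjoint_left.2 fun S hS hS' =>
      notMem_erase i V (mem_powerset.1 hS (mem_filter.1 hS').2.1)
  rw [hsplit, deficit_union hdisj]
  congr 1
  split_ifs with hix
  · subst hix
    rw [deficit_powerset_of_notMem (notMem_erase i V), card_erase_of_mem hi]
  · exact deficit_powerset_of_mem (mem_erase.2 ⟨Ne.symm hix, hx⟩)

theorem not_isFC_of_subset_upSet (w : ℕ → ℕ) (hp : Monotone p) (hA : A ⊆ {S ∈ V.powerset | p S})
    (h : ∀ x ∈ famUniverse A,
      0 < w x * 2 ^ (#V - 1) + ∑ i ∈ V, w i * deficit {S ∈ V.powerset | i ∈ S ∧ p S} x) :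
    ¬ IsFC A := by
  have hAV : A ⊆ V.powerset := hA.trans (filter_subset _ _)
  refine not_isFC_of_weighted_sum_deficit_pos (F := fun i : V => avoidOr V p i) (fun i => w i) hAV
    (fun i => hA.trans (monotone_filter_right _ fun _ _ => Or.inr)) (fun i => filter_subset _ _)
    (fun i => supClosed_avoidOr hp i) fun x hx => ?_
  have hxV := famUniverse_subset hAV hx
  calc (0 : ℤ)
      < w x * 2 ^ (#V - 1) + ∑ i ∈ V, w i * deficit {S ∈ V.powerset | i ∈ S ∧ p S} x := h x hx
    _ = ∑ i ∈ V, w i * deficit (avoidOr V p i) x := by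
        have hterm : ∀ i ∈ V, w i * deficit (avoidOr V p i) x =
            w i * ((if i = x then 2 ^ (#V - 1) else 0) +
              deficit {S ∈ V.powerset | i ∈ S ∧ p S} x) :=
          fun i hi => by rw [deficit_avoidOr hi hxV]
        rw [sum_congr rfl hterm]
        simp [mul_add, sum_add_distrib, hxV]
    _ = ∑ i : V, w i * deficit (avoidOr V p i) x :=
        (sum_coe_sort V fun i => w i * deficit (avoidOr V p i) x).symm

end Criterion

section Witness

/-- On subsets of `{1, …, 9}`, this is the up-set generated by the 6-element sets that contain `9`
together with `8` or with `5, 6, 7`. -/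
def IsLarge (S : Finset ℕ) : Prop :=
  6 ≤ #S ∧ 9 ∈ S ∧ (8 ∈ S ∨ {5, 6, 7} ⊆ S)

instance : DecidablePred IsLarge := fun S =>
  inferInstanceAs (Decidable (6 ≤ #S ∧ 9 ∈ S ∧ (8 ∈ S ∨ {5, 6, 7} ⊆ S)))

lemma monotone_isLarge : Monotone IsLarge := fun _ _ hST ⟨hcard, h9, h⟩ =>
  ⟨hcard.trans (card_le_card hST), hST h9, h.imp (@hST 8) (Subset.trans · hST)⟩

/-- The 41 minimal members of `IsLarge` in `{1, …, 9}`. -/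
def largeSixSets : Finset (Finset ℕ) := {S ∈ (Icc 1 9).powersetCard 6 | IsLarge S}

lemma card_largeSixSets : #largeSixSets = 41 := by decide +kernel

lemma famUniverse_largeSixSets : famUniverse largeSixSets = Icc 1 9 := by decide +kernel

lemma isKFamily_largeSixSets : IsKFamily 6 9 largeSixSets :=
  ⟨fun _ hS => (mem_powersetCard.1 (mem_filter.1 hS).1).symm, famUniverse_largeSixSets⟩

lemma largeSixSets_subset : largeSixSets ⊆ {S ∈ (Icc 1 9).powerset | IsLarge S} :=
  filter_subset_filter _ fun _ hS => mem_powerset.2 (mem_powersetCard.1 hS).1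

/-- Weights for the criterion `not_isFC_of_subset_upSet`, constant on the orbits `{1, 2, 3, 4}`,
`{5, 6, 7}`, `{8}` and `{9}` of the symmetries of `IsLarge`. They are the solution of the resulting
four linear inequalities in natural numbers with the smallest total weight. -/
def witnessWeight (i : ℕ) : ℕ :=
  if i ≤ 4 then 6 else if i ≤ 7 then 8 else if i = 8 then 14 else 19

lemma weighted_deficit_isLarge_pos : ∀ x ∈ Icc 1 9,
    0 < (witnessWeight x * 2 ^ (#(Icc 1 9) - 1) + ∑ i ∈ Icc 1 9,
      witnessWeight i * deficit {S ∈ (Icc 1 9).powerset | i ∈ S ∧ IsLarge S} x : ℤ) := by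
  decide +kernel

end Witness

end NonFC

/-- FC(6, 9) ≥ 42: there is a Non-FC family of 41 distinct 6-element subsets of
{1, …, 9} with universe {1, …, 9}. -/
theorem FC_lower_bound_6_9 :
    ∃ A : Finset (Finset ℕ), A.card = 41 ∧ IsKFamily 6 9 A ∧ ¬ IsFC A := by
  refine ⟨largeSixSets, card_largeSixSets, isKFamily_largeSixSets, ?_⟩
  refine not_isFC_of_subset_upSet witnessWeight monotone_isLarge largeSixSets_subset fun x hx => ?_
  rw [famUniverse_largeSixSets] at hx
  exact weighted_deficit_isLarge_pos x hx
end
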